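/- For every integer k ≥ 1 and every real number x with x² ≠ 1: Σ_{i=1}^{k} U_i(x)² = (U_2(x)·(U_{2k}(x) - 1) - 2x·U_{2k-1}(x) - 2k)/(4(x² - 1)). -/

import Mathlib

/-- Evaluation of the Chebyshev polynomial of the first kind `T_n` at a real `x`
(indices extended to all integers via the Chebyshev recurrence). -/
noncomputable def chebT (n : ℤ) (x : ℝ) : ℝ := (Polynomial.Chebyshev.T ℝ n).eval x

/-- Evaluation of the Chebyshev polynomial of the second kind `U_n` at a real `x`
(indices extended to all integers via the Chebyshev recurrence). -/
noncomputable def chebU (n : ℤ) (x : ℝ) : ℝ := (Polynomial.Chebyshev.U ℝ n).eval x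

/-- `Z_n(x) = (U_n(x) - U_{n-1}(x) - 1)/(2(x - 1))`. -/
noncomputable def Zc (n : ℤ) (x : ℝ) : ℝ := (chebU n x - chebU (n - 1) x - 1) / (2 * (x - 1))

theorem chebU_rec (n : ℤ) (x : ℝ) : chebU (n + 1) x = 2 * x * chebU n x - chebU (n - 1) x := by
  simp [chebU, Polynomial.Chebyshev.U_add_one]

theorem sum_U_sq_aux (x : ℝ) (k : ℕ) :
    chebU k x ^ 2 - 2 * x * chebU k x * chebU (k - 1) x + chebU (k - 1) x ^ 2 = 1 ∧
    chebU (2 * (k : ℤ)) x = chebU k x ^ 2 - chebU (k - 1) x ^ 2 ∧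
    chebU (2 * (k : ℤ) - 1) x = 2 * chebU k x * chebU (k - 1) x - 2 * x * chebU (k - 1) x ^ 2 ∧
    (∑ i ∈ Finset.Icc (1 : ℤ) (k : ℤ), chebU i x ^ 2) * (4 * (x ^ 2 - 1)) =
      (4 * x ^ 2 - 1) * (chebU (2 * (k : ℤ)) x - 1) - 2 * x * chebU (2 * (k : ℤ) - 1) x
        - 2 * k := by
  induction k with
  | zero => simp [chebU]
  | succ k ih =>
    obtain ⟨h1, h2, h3, h4⟩ := ih
    have e1 := chebU_rec k x
    have e2 := chebU_rec (2 * (k : ℤ)) x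
    have e3 := chebU_rec (2 * (k : ℤ) + 1) x
    have i1 : 2 * ((k : ℤ) + 1) = 2 * (k : ℤ) + 1 + 1 := by ring
    have i2 : 2 * (k : ℤ) + 1 + 1 - 1 = 2 * (k : ℤ) + 1 := by ring
    have i3 : (k : ℤ) + 1 - 1 = k := by ring
    have i4 : 2 * (k : ℤ) + 1 - 1 = 2 * (k : ℤ) := by ring
    have hs : ∑ i ∈ Finset.Icc (1 : ℤ) ((k : ℤ) + 1), chebU i x ^ 2 =
        ∑ i ∈ Finset.Icc (1 : ℤ) (k : ℤ), chebU i x ^ 2 + chebU ((k : ℤ) + 1) x ^ 2 := by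
      have : Finset.Icc (1 : ℤ) ((k : ℤ) + 1) =
          insert ((k : ℤ) + 1) (Finset.Icc (1 : ℤ) (k : ℤ)) := by
        ext j; simp only [Finset.mem_insert, Finset.mem_Icc]; omega
      rw [this, Finset.sum_insert (by simp), add_comm]
    push_cast
    rw [i1, i2, i3, hs, add_mul, h4, e3, i4, e2, e1, h2, h3]
    generalize chebU (k : ℤ) x = a at *
    generalize chebU ((k : ℤ) - 1) x = b at *
    refine ⟨?_, ?_, ?_, ?_⟩
    · linear_combination h1
    · ring
    · ring
    · linear_combination (-2) * h1

/-- `Σ_{i=1}^{k} U_i(x)² = (U_2(x)·(U_{2k}(x) - 1) - 2x·U_{2k-1}(x) - 2k)/(4(x² - 1))`. -/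
theorem sum_U_sq (k : ℕ) (hk : 1 ≤ k) (x : ℝ) (hx : x ^ 2 ≠ 1) :
    ∑ i ∈ Finset.Icc (1 : ℤ) (k : ℤ), chebU i x ^ 2 =
      (chebU 2 x * (chebU (2 * (k : ℤ)) x - 1) - 2 * x * chebU (2 * (k : ℤ) - 1) x - 2 * k) /
        (4 * (x ^ 2 - 1)) := by
  have hx' : 4 * (x ^ 2 - 1) ≠ 0 := mul_ne_zero (by norm_num) (sub_ne_zero.mpr hx)
  have hU : chebU 2 x = 4 * x ^ 2 - 1 := by simp [chebU, Polynomial.Chebyshev.U_two]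
  rw [eq_div_iff hx', hU]
  exact (sum_U_sq_aux x k).2.2.2
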